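/- Let 1 ≤ p < ∞ and let n ≥ 2 be an integer. Let f be analytic on the unit disk 𝔻 with f ∈ B_p, let F(z) = ∫₀ᶻ f(w) dw be its primitive, and assume F ∈ H² with a.e. radial boundary values F*. Then there exists a function F̃ of class C¹ on {z ∈ ℂ : |z| > 1} such that: (a) for a.e. θ ∈ [0,2π], F̃(re^{iθ}) → F*(θ) as r → 1⁺; (b) F̃(z) = O(z^n) as z → ∞; (c) ∂̄F̃(z) = O(z^{n−2}) as z → ∞; and (d) ∫_{|z|>1} |∂̄F̃(z)|^p / (|z|^{np/2 − p + 2} − 1)² dA(z) < ∞. -/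

import Mathlib

open MeasureTheory Metric Complex Filter Set
open scoped ENNReal Real Topology

noncomputable section

/-- The Cauchy–Riemann (Wirtinger) operator `∂̄g = (1/2)(∂g/∂x + i ∂g/∂y)`. -/
def dbar (g : ℂ → ℂ) (z : ℂ) : ℂ :=
  (1 / 2 : ℂ) * (fderiv ℝ g z 1 + Complex.I * fderiv ℝ g z Complex.I)

/-- Membership in the Hardy space `H²`. -/
def MemH2 (F : ℂ → ℂ) : Prop :=
  ∃ M : ℝ, ∀ r ∈ Set.Ioo (0 : ℝ) 1,
    (∫ θ in (0 : ℝ)..(2 * Real.pi),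
      ‖F ((r : ℂ) * Complex.exp ((θ : ℂ) * Complex.I))‖ ^ 2) ≤ M

/-- `Fb` is the a.e. radial boundary value function of `F` (from inside). -/
def RadialLimitIn (F : ℂ → ℂ) (Fb : ℝ → ℂ) : Prop :=
  ∀ᵐ (θ : ℝ) ∂(volume.restrict (Set.Ioc (0 : ℝ) (2 * Real.pi))),
    Tendsto (fun r : ℝ => F ((r : ℂ) * Complex.exp ((θ : ℂ) * Complex.I)))
      (𝓝[<] 1) (𝓝 (Fb θ))

/-- `Fb` is the a.e. radial limit function of `G` from outside the circle. -/
def RadialLimitOut (G : ℂ → ℂ) (Fb : ℝ → ℂ) : Prop :=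
  ∀ᵐ (θ : ℝ) ∂(volume.restrict (Set.Ioc (0 : ℝ) (2 * Real.pi))),
    Tendsto (fun r : ℝ => G ((r : ℂ) * Complex.exp ((θ : ℂ) * Complex.I)))
      (𝓝[>] 1) (𝓝 (Fb θ))

/-- `g(z) = O(z^m)` as `z → ∞`. -/
def BigOPow (g : ℂ → ℂ) (m : ℕ) : Prop :=
  ∃ C R : ℝ, 0 < C ∧ 0 < R ∧ ∀ z : ℂ, R ≤ ‖z‖ → ‖g z‖ ≤ C * ‖z‖ ^ m

/-- Membership in the Besov space `B_p`, via the `n`-th derivative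
characterization. -/
def MemBesov (p : ℝ) (n : ℕ) (f : ℂ → ℂ) : Prop :=
  (∫⁻ z in ball (0 : ℂ) 1,
    ENNReal.ofReal (‖iteratedDeriv n f z‖ ^ p * (1 - ‖z‖ ^ 2) ^ ((n : ℝ) * p - 2))) < ⊤

lemma circle_mean_le (g : ℂ → ℂ) (z : ℂ) (r : ℝ) (hr : 0 < r)
    (hg : DiffContOnCl ℂ g (ball z r)) :
    ENNReal.ofReal (2 * π) * ‖g z‖ₑ ≤
      ∫⁻ θ in Ioo (-π) π, ‖g (z + r * (Real.cos θ + Real.sin θ * Complex.I))‖ₑ := by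
  have h1 : Real.circleAverage g z r = g z := by
    apply DiffContOnCl.circleAverage
    rwa [abs_of_pos hr]
  have hper : Function.Periodic (fun θ : ℝ => g (circleMap z r θ)) (2 * π) :=
    (periodic_circleMap z r).comp g
  have h2 := hper.intervalIntegral_add_eq 0 (-π)
  rw [zero_add, show -π + 2 * π = π by ring] at h2
  have h3 : (2 * π) • g z = ∫ θ in (-π)..π, g (circleMap z r θ) := by
    rw [← h2, ← h1, Real.circleAverage, smul_smul, mul_inv_cancel₀ (by positivity), one_smul]
  have h4 : ENNReal.ofReal (2 * π) * ‖g z‖ₑ = ‖(2 * π) • g z‖ₑ := by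
    rw [enorm_smul, Real.enorm_of_nonneg (by positivity)]
  rw [h4, h3, intervalIntegral.integral_of_le (by linarith [Real.pi_pos]),
    integral_Ioc_eq_integral_Ioo]
  refine (enorm_integral_le_lintegral_enorm _).trans_eq ?_
  congr 1 with θ
  simp [circleMap, Complex.exp_mul_I]

lemma area_mean_le (g : ℂ → ℂ) (z : ℂ) (R : ℝ) (hR : 0 < R)
    (hg : DifferentiableOn ℂ g (ball z R)) :
    ENNReal.ofReal (π * R ^ 2 / 2) * ‖g z‖ₑ ≤ ∫⁻ y in ball z R, ‖g y‖ₑ := by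
  classical
  set H : ℂ → ℝ≥0∞ := (ball z R).indicator (fun y => ‖g y‖ₑ) with hH
  have hHm : Measurable H := by
    have : H = (ball z R).piecewise (fun y => ‖g y‖ₑ) (fun _ => 0) := by
      rw [hH, ← Set.piecewise_eq_indicator]; rfl
    rw [this]
    exact ContinuousOn.measurable_piecewise hg.continuousOn.enorm continuousOn_const
      measurableSet_ball
  rw [← lintegral_indicator measurableSet_ball, ← hH, ← lintegral_add_left_eq_self H z,
    ← Complex.lintegral_comp_polarCoord_symm, polarCoord_target, Measure.volume_eq_prod,
    ← Measure.prod_restrict, lintegral_prod]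
  · calc ENNReal.ofReal (π * R ^ 2 / 2) * ‖g z‖ₑ
        = ∫⁻ r in Ioo (R/2) R, ENNReal.ofReal (R/2) * (ENNReal.ofReal (2 * π) * ‖g z‖ₑ) := by
          have e : ENNReal.ofReal (π * R ^ 2 / 2) =
              ENNReal.ofReal (R/2) * ENNReal.ofReal (2 * π) * ENNReal.ofReal (R - R/2) := by
            rw [← ENNReal.ofReal_mul (by linarith), ← ENNReal.ofReal_mul (by positivity)]
            congr 1
            ring
          rw [setLIntegral_const, Real.volume_Ioo, e]
          ring
      _ ≤ ∫⁻ r in Ioo (R/2) R, ∫⁻ θ in Ioo (-π) π, 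
          ENNReal.ofReal r • H (z + Complex.polarCoord.symm (r, θ)) := by
          refine setLIntegral_mono' measurableSet_Ioo fun r hr => ?_
          simp only [smul_eq_mul]
          rw [lintegral_const_mul' _ _ ENNReal.ofReal_ne_top]
          have hr0 : 0 < r := by linarith [hr.1]
          gcongr
          · exact hr.1.le
          refine (circle_mean_le g z r hr0 ?_).trans_eq ?_
          · apply DifferentiableOn.diffContOnCl
            rw [closure_ball _ hr0.ne']
            exact hg.mono (closedBall_subset_ball hr.2)
          · congr 1 with θ
            rw [hH, Set.indicator_of_mem]
            · simp
            · rw [mem_ball, dist_eq_norm, add_sub_cancel_left, Complex.norm_polarCoord_symm, abs_of_pos hr0]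
              exact hr.2
      _ ≤ _ := by
          apply lintegral_mono_set
          intro r hr
          exact lt_trans (by linarith) hr.1
  · apply Measurable.aemeasurable
    simp only [smul_eq_mul, Complex.polarCoord_symm_apply]
    fun_prop

lemma besov_pointwise (p : ℝ) (hp : 1 ≤ p) (n : ℕ) (hn : 2 ≤ n) (g : ℂ → ℂ)
    (hg : DifferentiableOn ℂ g (ball (0 : ℂ) 1))
    (hB : (∫⁻ z in ball (0 : ℂ) 1,
      ENNReal.ofReal (‖g z‖ ^ p * (1 - ‖z‖ ^ 2) ^ ((n : ℝ) * p - 2))) < ⊤) :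
    ∃ C : ℝ, ∀ z ∈ ball (0 : ℂ) 1, ‖g z‖ * (1 - ‖z‖) ^ n ≤ C := by
  set K := ∫⁻ z in ball (0 : ℂ) 1,
      ENNReal.ofReal (‖g z‖ ^ p * (1 - ‖z‖ ^ 2) ^ ((n : ℝ) * p - 2)) with hK
  set k := K.toReal with hk
  have hk0 : 0 ≤ k := ENNReal.toReal_nonneg
  have hKk : K = ENNReal.ofReal k := (ENNReal.ofReal_toReal hB.ne).symm
  have hnp : 0 ≤ (n : ℝ) * p - 2 := by
    have : (2 : ℝ) ≤ n := by exact_mod_cast hn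
    nlinarith
  refine ⟨(π + k) / (π / 2) * 2 ^ n, fun z hz => ?_⟩
  have hz1 : ‖z‖ < 1 := by simpa using hz
  obtain ⟨s, hs⟩ : ∃ s, s = (1 - ‖z‖) / 2 := ⟨_, rfl⟩
  have hs0 : 0 < s := by rw [hs]; linarith
  have hsub : ball z s ⊆ ball (0 : ℂ) 1 := by
    intro y hy
    rw [mem_ball, dist_eq_norm] at hy
    have := norm_le_norm_sub_add y z
    simp only [mem_ball, dist_zero_right]
    linarith
  have key : ∀ y ∈ ball z s, ENNReal.ofReal (s ^ n) * ‖g y‖ₑ ≤ 1 + ENNReal.ofReal (s ^ 2) *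
      ENNReal.ofReal (‖g y‖ ^ p * (1 - ‖y‖ ^ 2) ^ ((n : ℝ) * p - 2)) := by
    intro y hy
    have hy1 : ‖y‖ < 1 := by simpa using hsub hy
    have hys : s ≤ 1 - ‖y‖ ^ 2 := by
      rw [mem_ball, dist_eq_norm] at hy
      have := norm_le_norm_sub_add y z
      nlinarith [norm_nonneg y]
    rw [← ofReal_norm, ← ENNReal.ofReal_mul (by positivity),
      ← ENNReal.ofReal_mul (by positivity), ← ENNReal.ofReal_one,
      ← ENNReal.ofReal_add zero_le_one]
    · apply ENNReal.ofReal_le_ofReal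
      have h1 : s ^ n * ‖g y‖ ≤ 1 + (s ^ n * ‖g y‖) ^ p := by
        rcases le_total (s ^ n * ‖g y‖) 1 with h | h
        · have : 0 ≤ (s ^ n * ‖g y‖) ^ p := by positivity
          linarith
        · have := Real.self_le_rpow_of_one_le h hp
          linarith
      have h2 : (s ^ n * ‖g y‖) ^ p = s ^ 2 * (‖g y‖ ^ p * s ^ ((n : ℝ) * p - 2)) := by
        rw [Real.mul_rpow (by positivity) (norm_nonneg _), ← Real.rpow_natCast s n,
          ← Real.rpow_mul hs0.le, Real.rpow_sub hs0, Real.rpow_two]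
        field_simp
      rw [h2] at h1
      refine h1.trans ?_
      gcongr
    · have : 0 ≤ 1 - ‖y‖ ^ 2 := by linarith
      positivity
  have h3 : ENNReal.ofReal (s ^ n) * (ENNReal.ofReal (π * s ^ 2 / 2) * ‖g z‖ₑ) ≤
      ENNReal.ofReal (s ^ 2 * π) + ENNReal.ofReal (s ^ 2) * ENNReal.ofReal k := by
    calc _ ≤ ENNReal.ofReal (s ^ n) * ∫⁻ y in ball z s, ‖g y‖ₑ := by
          gcongr
          exact area_mean_le g z s hs0 (hg.mono hsub)
      _ = ∫⁻ y in ball z s, ENNReal.ofReal (s ^ n) * ‖g y‖ₑ := by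
          rw [lintegral_const_mul' _ _ ENNReal.ofReal_ne_top]
      _ ≤ ∫⁻ y in ball z s, (1 + ENNReal.ofReal (s ^ 2) *
            ENNReal.ofReal (‖g y‖ ^ p * (1 - ‖y‖ ^ 2) ^ ((n : ℝ) * p - 2))) :=
          setLIntegral_mono' measurableSet_ball key
      _ = volume (ball z s) + ENNReal.ofReal (s ^ 2) * ∫⁻ y in ball z s,
            ENNReal.ofReal (‖g y‖ ^ p * (1 - ‖y‖ ^ 2) ^ ((n : ℝ) * p - 2)) := by
          rw [lintegral_add_left measurable_const, lintegral_const_mul' _ _ ENNReal.ofReal_ne_top]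
          simp
      _ ≤ _ := by
          rw [← hKk, hK]
          gcongr
          rw [Complex.volume_ball, ENNReal.ofReal_mul (by positivity), ENNReal.ofReal_pow hs0.le]
          gcongr
          rw [← NNReal.coe_real_pi, ENNReal.ofReal_coe_nnreal]
  rw [← ofReal_norm, ← ENNReal.ofReal_mul (by positivity),
    ← ENNReal.ofReal_mul (by positivity), ← ENNReal.ofReal_mul (by positivity),
    ← ENNReal.ofReal_add (by positivity) (by positivity),
    ENNReal.ofReal_le_ofReal_iff (by positivity)] at h3
  have h4 : ‖g z‖ * s ^ n ≤ (π + k) / (π / 2) := by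
    rw [le_div_iff₀ (by positivity)]
    have : s ^ 2 * (‖g z‖ * s ^ n * (π / 2)) ≤ s ^ 2 * (π + k) := by
      linarith
    exact le_of_mul_le_mul_left this (by positivity)
  have h5 : 1 - ‖z‖ = s * 2 := by rw [hs]; ring
  rw [h5, mul_pow, ← mul_assoc]
  gcongr

lemma growth_step (g g' : ℂ → ℂ) (hg : ∀ z ∈ ball (0 : ℂ) 1, HasDerivAt g (g' z) z)
    (s : ℝ) (hs : 0 < s) (C : ℝ) (hC : 0 ≤ C)
    (hb : ∀ z ∈ ball (0 : ℂ) 1, ‖g' z‖ ≤ C * (1 - ‖z‖) ^ (-(s + 1))) :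
    ∃ C' : ℝ, 0 ≤ C' ∧ ∀ z ∈ ball (0 : ℂ) 1, ‖g z‖ ≤ C' * (1 - ‖z‖) ^ (-s) := by
  refine ⟨‖g 0‖ + C / s, by positivity, fun w hw => ?_⟩
  have hw1 : ‖w‖ < 1 := by simpa using hw
  have hnorm : ∀ t ∈ Icc (0 : ℝ) 1, ‖(t : ℂ) * w‖ = t * ‖w‖ := by
    intro t ht
    rw [norm_mul, Complex.norm_real, Real.norm_of_nonneg ht.1]
  have hlt : ∀ t ∈ Icc (0 : ℝ) 1, t * ‖w‖ < 1 := by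
    intro t ht
    nlinarith [ht.1, ht.2, norm_nonneg w]
  have hmem : ∀ t ∈ Icc (0 : ℝ) 1, (t : ℂ) * w ∈ ball (0 : ℂ) 1 := by
    intro t ht
    rw [mem_ball, dist_zero_right, hnorm t ht]
    exact hlt t ht
  have hder : ∀ t ∈ Icc (0 : ℝ) 1,
      HasDerivAt (fun t : ℝ => g ((t : ℂ) * w)) (g' ((t : ℂ) * w) * w) t := by
    intro t ht
    have h1 : HasDerivAt (fun t : ℝ => (t : ℂ) * w) w t := by
      simpa using (Complex.ofRealCLM.hasDerivAt (x := t)).mul_const w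
    exact HasDerivAt.comp t (hg _ (hmem t ht)) h1
  have hBder : ∀ t ∈ Icc (0 : ℝ) 1,
      HasDerivAt (fun t : ℝ => ‖g 0‖ + C / s * (1 - t * ‖w‖) ^ (-s))
        (C * (1 - t * ‖w‖) ^ (-(s + 1)) * ‖w‖) t := by
    intro t ht
    have h0 : 0 < 1 - t * ‖w‖ := by linarith [hlt t ht]
    have h1 : HasDerivAt (fun t : ℝ => 1 - t * ‖w‖) (-‖w‖) t := by
      simpa using ((hasDerivAt_id t).mul_const ‖w‖).const_sub 1
    have h2 := ((h1.rpow_const (p := -s) (Or.inl h0.ne')).const_mul (C / s)).const_add ‖g 0‖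
    have e : C * (1 - t * ‖w‖) ^ (-(s + 1)) * ‖w‖ =
        C / s * (-‖w‖ * -s * (1 - t * ‖w‖) ^ (-s - 1)) := by
      rw [show -s - 1 = -(s + 1) by ring]
      field_simp
    rw [e]
    exact h2
  have := image_norm_le_of_norm_deriv_right_le_deriv_boundary' (a := 0) (b := 1)
    (f := fun t : ℝ => g ((t : ℂ) * w)) (f' := fun t : ℝ => g' ((t : ℂ) * w) * w)
    (B := fun t : ℝ => ‖g 0‖ + C / s * (1 - t * ‖w‖) ^ (-s))
    (B' := fun t : ℝ => C * (1 - t * ‖w‖) ^ (-(s + 1)) * ‖w‖)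
    (fun t ht => (hder t ht).continuousAt.continuousWithinAt)
    (fun t ht => (hder t (Ico_subset_Icc_self ht)).hasDerivWithinAt)
    (by simp; positivity)
    (fun t ht => (hBder t ht).continuousAt.continuousWithinAt)
    (fun t ht => (hBder t (Ico_subset_Icc_self ht)).hasDerivWithinAt)
    (fun t ht => by
      have ht := Ico_subset_Icc_self ht
      have h := hb _ (hmem t ht)
      rw [hnorm t ht] at h
      rw [norm_mul]
      gcongr) (right_mem_Icc.2 zero_le_one)
  simp only [Complex.ofReal_one, one_mul] at this
  have h1 : 1 ≤ (1 - ‖w‖) ^ (-s) :=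
    Real.one_le_rpow_of_pos_of_le_one_of_nonpos (by linarith) (by linarith [norm_nonneg w])
      (by linarith)
  nlinarith [norm_nonneg (g 0)]

lemma growth_all (G : ℕ → ℂ → ℂ)
    (hG : ∀ k, ∀ z ∈ ball (0 : ℂ) 1, HasDerivAt (G k) (G (k + 1) z) z)
    (n : ℕ) (C : ℝ) (hC : ∀ z ∈ ball (0 : ℂ) 1, ‖G (n + 1) z‖ * (1 - ‖z‖) ^ n ≤ C) :
    ∀ k ≤ n, ∃ C' : ℝ, 0 ≤ C' ∧
      ∀ z ∈ ball (0 : ℂ) 1, ‖G (k + 1) z‖ ≤ C' * (1 - ‖z‖) ^ (-((k : ℝ) + 1 / 2)) := by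
  intro k hk
  induction hk using Nat.decreasingInduction with
  | self =>
    refine ⟨max C 0, le_max_right _ _, fun z hz => ?_⟩
    have hz1 : ‖z‖ < 1 := by simpa using hz
    have h0 : 0 < 1 - ‖z‖ := by linarith
    have h1 : ‖G (n + 1) z‖ ≤ max C 0 * (1 - ‖z‖) ^ (-(n : ℝ)) := by
      rw [Real.rpow_neg h0.le, Real.rpow_natCast, ← div_eq_mul_inv, le_div_iff₀ (by positivity)]
      exact (hC z hz).trans (le_max_left _ _)
    refine h1.trans ?_
    gcongr ?_ * ?_
    apply Real.rpow_le_rpow_of_exponent_ge h0 (by linarith [norm_nonneg z])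
    linarith
  | of_succ k hk ih =>
    obtain ⟨C', hC', h⟩ := ih
    refine growth_step (G (k + 1)) (G (k + 1 + 1)) (hG _) _ (by positivity) C' hC' ?_
    intro z hz
    have := h z hz
    push_cast at this
    rwa [show (k : ℝ) + 1 / 2 + 1 = k + 1 + 1 / 2 by ring]

def cref (z : ℂ) : ℂ := ((starRingEnd ℂ) z)⁻¹

def reflD (z : ℂ) : ℂ →L[ℝ] ℂ :=
  (-(((starRingEnd ℂ) z) ^ 2)⁻¹ : ℂ) • (Complex.conjCLE : ℂ →L[ℝ] ℂ)

lemma norm_cref (z : ℂ) : ‖cref z‖ = ‖z‖⁻¹ := by simp [cref]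

lemma cref_mem {z : ℂ} (hz : 1 < ‖z‖) : cref z ∈ ball (0 : ℂ) 1 := by
  rw [mem_ball, dist_zero_right, norm_cref]
  exact inv_lt_one_of_one_lt₀ hz

lemma reflD_apply (z v : ℂ) : reflD z v = -(((starRingEnd ℂ) z) ^ 2)⁻¹ * (starRingEnd ℂ) v := by
  simp [reflD]

lemma cref_hasFDerivAt {z : ℂ} (hz : z ≠ 0) : HasFDerivAt cref (reflD z) z := by
  have h1 : HasFDerivAt (fun z : ℂ => (starRingEnd ℂ) z) (Complex.conjCLE : ℂ →L[ℝ] ℂ) z :=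
    Complex.conjCLE.hasFDerivAt
  have h2 : HasDerivAt (fun w : ℂ => w⁻¹) (-(((starRingEnd ℂ) z) ^ 2)⁻¹) ((starRingEnd ℂ) z) :=
    hasDerivAt_inv (by simpa using hz)
  exact h2.comp_hasFDerivAt_of_eq z h1 rfl

lemma reflD_det (z : ℂ) : |(reflD z).det| = (‖z‖ ^ 4)⁻¹ := by
  have : ((reflD z : ℂ →L[ℝ] ℂ) : ℂ →ₗ[ℝ] ℂ) =
      (Algebra.lmul ℝ ℂ (-(((starRingEnd ℂ) z) ^ 2)⁻¹)) ∘ₗ (Complex.conjAe.toLinearMap) := by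
    ext
    all_goals simp [reflD]
  rw [ContinuousLinearMap.det, this, LinearMap.det_comp, Complex.det_conjAe, ← Algebra.norm_apply,
    Algebra.norm_complex_apply, Complex.normSq_eq_norm_sq]
  simp
  ring

def Ftl (G : ℕ → ℂ → ℂ) (n : ℕ) (z : ℂ) : ℂ :=
  ∑ k ∈ Finset.range (n + 1), G k (cref z) * ((z - cref z) ^ k / (k.factorial : ℂ))

lemma Ftl_hasFDerivAt (G : ℕ → ℂ → ℂ)
    (hG : ∀ k, ∀ z ∈ ball (0 : ℂ) 1, HasDerivAt (G k) (G (k + 1) z) z)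
    {z : ℂ} (hz : 1 < ‖z‖) (n : ℕ) : 
    HasFDerivAt (Ftl G n) 
      ((G (n + 1) (cref z) * ((z - cref z) ^ n / (n.factorial : ℂ))) • reflD z +
       (∑ k ∈ Finset.range n, G (k + 1) (cref z) * ((z - cref z) ^ k / (k.factorial : ℂ))) • 
        ContinuousLinearMap.id ℝ ℂ) z := by
  have hz0 : z ≠ 0 := by rintro rfl; simp at hz; linarith
  have hT := cref_hasFDerivAt hz0
  have hGT : ∀ k, HasFDerivAt (fun z => G k (cref z)) (G (k + 1) (cref z) • reflD z) z :=
    fun k => (hG k _ (cref_mem hz)).comp_hasFDerivAt z hT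
  induction n with
  | zero =>
    have : Ftl G 0 = fun z => G 0 (cref z) := by
      ext z; simp [Ftl]
    rw [this]
    exact (hGT 0).congr_fderiv (by ext <;> simp)
  | succ n ih =>
    have e : Ftl G (n + 1) = fun z => Ftl G n z +
        G (n + 1) (cref z) * ((z - cref z) ^ (n + 1) / ((n + 1).factorial : ℂ)) := by
      ext z; simp only [Ftl]; rw [Finset.sum_range_succ]
    rw [e]
    have h1 : HasFDerivAt (fun z => z - cref z) (ContinuousLinearMap.id ℝ ℂ - reflD z) z :=
      (hasFDerivAt_id z).sub hT
    have h2 : HasDerivAt (fun w : ℂ => w ^ (n + 1) / ((n + 1).factorial : ℂ))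
        ((z - cref z) ^ n / (n.factorial : ℂ)) (z - cref z) := by
      have := (hasDerivAt_pow (n + 1) (z - cref z)).div_const ((n + 1).factorial : ℂ)
      convert! this using 1
      rw [Nat.factorial_succ]
      have : (n.factorial : ℂ) ≠ 0 := by exact_mod_cast n.factorial_ne_zero
      have : (n : ℂ) + 1 ≠ 0 := by exact_mod_cast n.succ_ne_zero
      push_cast
      field_simp
    have h3 := h2.comp_hasFDerivAt z h1
    have h4 := ih.add ((hGT (n + 1)).mul h3)
    refine h4.congr_fderiv ?_
    ext v <;> simp [Finset.sum_range_succ] <;> ring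

lemma dbar_Ftl (G : ℕ → ℂ → ℂ)
    (hG : ∀ k, ∀ z ∈ ball (0 : ℂ) 1, HasDerivAt (G k) (G (k + 1) z) z)
    {z : ℂ} (hz : 1 < ‖z‖) (n : ℕ) : 
    dbar (Ftl G n) z = 
      -(G (n + 1) (cref z) * ((z - cref z) ^ n / (n.factorial : ℂ)) *
        (((starRingEnd ℂ) z) ^ 2)⁻¹) := by
  rw [dbar, (Ftl_hasFDerivAt G hG hz n).fderiv]
  simp [reflD_apply]
  ring_nf
  simp
  ring

lemma norm_sub_cref {z : ℂ} (hz : 1 < ‖z‖) : ‖z - cref z‖ = ‖z‖ - ‖z‖⁻¹ := by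
  have hz0 : z ≠ 0 := by rintro rfl; simp at hz; linarith
  have hc : (starRingEnd ℂ) z ≠ 0 := by simpa using hz0
  have h1 : z - cref z = ((‖z‖ ^ 2 - 1 : ℝ) : ℂ) / (starRingEnd ℂ) z := by
    rw [cref, eq_div_iff hc, sub_mul, inv_mul_cancel₀ hc, Complex.mul_conj,
      Complex.normSq_eq_norm_sq]
    push_cast
    ring
  have h2 : 0 ≤ ‖z‖ ^ 2 - 1 := by nlinarith
  rw [h1, norm_div, Complex.norm_real, Real.norm_of_nonneg h2, RCLike.norm_conj]
  field_simp

lemma norm_dbar_Ftl (G : ℕ → ℂ → ℂ)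
    (hG : ∀ k, ∀ z ∈ ball (0 : ℂ) 1, HasDerivAt (G k) (G (k + 1) z) z)
    {z : ℂ} (hz : 1 < ‖z‖) (n : ℕ) : 
    ‖dbar (Ftl G n) z‖ ≤ ‖G (n + 1) (cref z)‖ * (‖z‖ - ‖z‖⁻¹) ^ n / ‖z‖ ^ 2 := by
  rw [dbar_Ftl G hG hz, norm_neg, norm_mul, norm_mul, norm_div, norm_pow, norm_sub_cref hz,
    norm_inv, norm_pow, RCLike.norm_conj, ← div_eq_mul_inv]
  have h0 : 0 ≤ ‖z‖ - ‖z‖⁻¹ := by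
    rw [← norm_sub_cref hz]; positivity
  gcongr
  apply div_le_self (by positivity)
  simp only [Complex.norm_natCast]
  exact_mod_cast Nat.one_le_iff_ne_zero.2 n.factorial_ne_zero

lemma Ftl_contDiffOn (G : ℕ → ℂ → ℂ)
    (hG : ∀ k, ∀ z ∈ ball (0 : ℂ) 1, HasDerivAt (G k) (G (k + 1) z) z) (n : ℕ) :
    ContDiffOn ℝ 1 (Ftl G n) {z : ℂ | 1 < ‖z‖} := by
  have hr : ContDiffOn ℝ 1 cref {z : ℂ | 1 < ‖z‖} := by
    unfold cref
    apply ContDiffOn.inv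
    · exact (Complex.conjCLE.contDiff).contDiffOn
    · intro z hz h
      simp only [map_eq_zero] at h
      simp [h] at hz
      linarith
  have hGc : ∀ k, ContDiffOn ℝ 1 (fun z => G k (cref z)) {z : ℂ | 1 < ‖z‖} := by
    intro k
    have : DifferentiableOn ℂ (G k) (ball 0 1) :=
      fun z hz => (hG k z hz).differentiableAt.differentiableWithinAt
    have h2 : ContDiffOn ℝ 1 (G k) (ball 0 1) := (this.contDiffOn isOpen_ball).restrict_scalars ℝ
    exact h2.comp hr fun z hz => cref_mem hz
  unfold Ftl
  apply ContDiffOn.sum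
  intro k _
  apply (hGc k).mul
  exact ((contDiffOn_id.sub hr).pow k).div_const _

lemma weight_bound (x : ℝ) (hx : 1 < x) (p : ℝ) (hp : 1 ≤ p) (n : ℕ) (hn : 2 ≤ n) :
    ((x - x⁻¹) ^ n / x ^ 2) ^ p / (x ^ ((n : ℝ) * p / 2 - p + 2) - 1) ^ 2 ≤
      (x ^ 4)⁻¹ * (1 - x⁻¹ ^ 2) ^ ((n : ℝ) * p - 2) := by
  have hx0 : 0 < x := by linarith
  have hn' : (2 : ℝ) ≤ n := by exact_mod_cast hn
  obtain ⟨a, ha⟩ : ∃ a, a = (n : ℝ) * p / 2 - p + 2 := ⟨_, rfl⟩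
  have ha2 : 2 ≤ a := by rw [ha]; nlinarith
  obtain ⟨u, hu⟩ : ∃ u, u = 1 - x⁻¹ ^ 2 := ⟨_, rfl⟩
  have hxi : x⁻¹ < 1 := inv_lt_one_of_one_lt₀ hx
  have hxi0 : 0 < x⁻¹ := by positivity
  have hu0 : 0 < u := by rw [hu]; nlinarith
  rw [← ha, ← hu]
  have h1 : x - x⁻¹ = x * u := by rw [hu]; field_simp
  have h2 : ((x - x⁻¹) ^ n / x ^ 2) ^ p = (x ^ a) ^ 2 * (x ^ 4)⁻¹ * (u ^ ((n : ℝ) * p - 2) * u ^ 2) := by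
    have e1 : u ^ ((n : ℝ) * p - 2) * u ^ 2 = u ^ ((n : ℝ) * p) := by
      rw [← Real.rpow_natCast u 2, ← Real.rpow_add hu0]; congr 1; push_cast; ring
    have e2 : (x ^ a) ^ 2 * (x ^ 4)⁻¹ = x ^ ((n : ℝ) * p - 2 * p) := by
      rw [← Real.rpow_natCast (x ^ a) 2, ← Real.rpow_natCast x 4, ← Real.rpow_mul hx0.le,
        ← Real.rpow_neg hx0.le, ← Real.rpow_add hx0]; congr 1; rw [ha]; push_cast; ring
    rw [e1, e2, h1, mul_pow, Real.div_rpow (by positivity) (by positivity),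
      Real.mul_rpow (by positivity) (by positivity), Real.rpow_sub hx0,
      Real.rpow_mul hx0.le, Real.rpow_mul hx0.le, Real.rpow_mul hu0.le, Real.rpow_natCast,
      Real.rpow_natCast, Real.rpow_two]
    ring
  have h3 : x ^ a * u ≤ x ^ a - 1 := by
    have : x ^ (2 : ℝ) ≤ x ^ a := Real.rpow_le_rpow_of_exponent_le hx.le ha2
    rw [Real.rpow_two] at this
    have h : 1 ≤ x ^ a * x⁻¹ ^ 2 := by
      calc (1 : ℝ) = x ^ 2 * x⁻¹ ^ 2 := by field_simp
        _ ≤ _ := by gcongr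
    rw [hu]
    linarith
  have h4 : 0 < x ^ a * u := by positivity
  rw [h2, div_le_iff₀ (by nlinarith)]
  calc _ = (x ^ 4)⁻¹ * u ^ ((n : ℝ) * p - 2) * (x ^ a * u) ^ 2 := by ring
    _ ≤ _ := by gcongr

lemma Ftl_integral (G : ℕ → ℂ → ℂ)
    (hG : ∀ k, ∀ z ∈ ball (0 : ℂ) 1, HasDerivAt (G k) (G (k + 1) z) z)
    (p : ℝ) (hp : 1 ≤ p) (n : ℕ) (hn : 2 ≤ n)
    (hB : (∫⁻ z in ball (0 : ℂ) 1,
      ENNReal.ofReal (‖G (n + 1) z‖ ^ p * (1 - ‖z‖ ^ 2) ^ ((n : ℝ) * p - 2))) < ⊤) :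
    (∫⁻ z in {z : ℂ | 1 < ‖z‖},
        ENNReal.ofReal (‖dbar (Ftl G n) z‖ ^ p /
          (‖z‖ ^ ((n : ℝ) * p / 2 - p + 2) - 1) ^ 2)) < ⊤ := by
  refine lt_of_le_of_lt ?_ hB
  have hmeas : MeasurableSet {z : ℂ | 1 < ‖z‖} :=
    (isOpen_lt continuous_const continuous_norm).measurableSet
  have hinj : InjOn cref {z : ℂ | 1 < ‖z‖} := by
    intro a _ b _ h
    exact (starRingEnd ℂ).injective (inv_injective h)
  have himg : cref '' {z : ℂ | 1 < ‖z‖} ⊆ ball (0 : ℂ) 1 := by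
    rintro _ ⟨z, hz, rfl⟩
    exact cref_mem hz
  refine le_trans ?_ (lintegral_mono_set himg)
  rw [lintegral_image_eq_lintegral_abs_det_fderiv_mul volume hmeas (f' := reflD)
    (fun z hz => (cref_hasFDerivAt (by
      rintro rfl
      simp at hz
      linarith)).hasFDerivWithinAt) hinj]
  refine setLIntegral_mono' hmeas fun z hz => ?_
  have hz : 1 < ‖z‖ := hz
  rw [← ENNReal.ofReal_mul (abs_nonneg _)]
  apply ENNReal.ofReal_le_ofReal
  rw [reflD_det, norm_cref]
  have h0 : 0 ≤ ‖z‖ - ‖z‖⁻¹ := by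
    rw [← norm_sub_cref hz]; positivity
  calc _ ≤ (‖G (n + 1) (cref z)‖ * (‖z‖ - ‖z‖⁻¹) ^ n / ‖z‖ ^ 2) ^ p /
          (‖z‖ ^ ((n : ℝ) * p / 2 - p + 2) - 1) ^ 2 := by
        gcongr
        exact norm_dbar_Ftl G hG hz n
    _ = ‖G (n + 1) (cref z)‖ ^ p * (((‖z‖ - ‖z‖⁻¹) ^ n / ‖z‖ ^ 2) ^ p /
          (‖z‖ ^ ((n : ℝ) * p / 2 - p + 2) - 1) ^ 2) := by
        rw [mul_div_assoc, Real.mul_rpow (norm_nonneg _) (by positivity), mul_div_assoc]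
    _ ≤ ‖G (n + 1) (cref z)‖ ^ p * ((‖z‖ ^ 4)⁻¹ * (1 - ‖z‖⁻¹ ^ 2) ^ ((n : ℝ) * p - 2)) := by
        gcongr
        exact weight_bound _ hz p hp n hn
    _ = _ := by ring

lemma G_bdd (G : ℕ → ℂ → ℂ)
    (hG : ∀ k, ∀ z ∈ ball (0 : ℂ) 1, HasDerivAt (G k) (G (k + 1) z) z) (k : ℕ) :
    ∃ M : ℝ, ∀ z : ℂ, 2 ≤ ‖z‖ → ‖G k (cref z)‖ ≤ M := by
  have hc : ContinuousOn (G k) (closedBall 0 (1 / 2)) := fun z hz =>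
    (hG k z (closedBall_subset_ball (by norm_num) hz)).continuousAt.continuousWithinAt
  obtain ⟨M, hM⟩ := (isCompact_closedBall (0 : ℂ) (1 / 2)).exists_bound_of_continuousOn hc
  refine ⟨M, fun z hz => hM _ ?_⟩
  rw [mem_closedBall, dist_zero_right, norm_cref, one_div]
  gcongr

lemma norm_sub_cref_le {z : ℂ} (hz : 1 < ‖z‖) : ‖z - cref z‖ ≤ ‖z‖ := by
  rw [norm_sub_cref hz]
  have : 0 ≤ ‖z‖⁻¹ := by positivity
  linarith

lemma Ftl_bigO (G : ℕ → ℂ → ℂ)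
    (hG : ∀ k, ∀ z ∈ ball (0 : ℂ) 1, HasDerivAt (G k) (G (k + 1) z) z) (n : ℕ) :
    BigOPow (Ftl G n) n := by
  choose M hM using G_bdd G hG
  have hM0 : ∀ k, 0 ≤ M k := fun k => (norm_nonneg _).trans (hM k 2 (by simp))
  refine ⟨∑ k ∈ Finset.range (n + 1), M k + 1, 2, ?_, two_pos, fun z hz => ?_⟩
  · have := Finset.sum_nonneg fun k (_ : k ∈ Finset.range (n + 1)) => hM0 k
    linarith
  have hz1 : 1 < ‖z‖ := by linarith
  have : ‖Ftl G n z‖ ≤ ∑ k ∈ Finset.range (n + 1), M k * ‖z‖ ^ n := by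
    refine norm_sum_le_of_le _ fun k hk => ?_
    rw [norm_mul, norm_div, norm_pow, Complex.norm_natCast]
    have hk' : k ≤ n := by simpa [Nat.lt_succ_iff] using hk
    have h1 : ‖z - cref z‖ ^ k / (k.factorial : ℝ) ≤ ‖z‖ ^ n := by
      calc _ ≤ ‖z - cref z‖ ^ k := by
            apply div_le_self (by positivity)
            exact_mod_cast Nat.one_le_iff_ne_zero.2 k.factorial_ne_zero
        _ ≤ ‖z‖ ^ k := by gcongr; exact norm_sub_cref_le hz1
        _ ≤ ‖z‖ ^ n := pow_le_pow_right₀ hz1.le hk'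
    exact mul_le_mul (hM k z hz) h1 (by positivity) (hM0 k)
  rw [← Finset.sum_mul] at this
  have h2 : 0 ≤ ‖z‖ ^ n := by positivity
  linarith

lemma dbar_bigO (G : ℕ → ℂ → ℂ)
    (hG : ∀ k, ∀ z ∈ ball (0 : ℂ) 1, HasDerivAt (G k) (G (k + 1) z) z) (n : ℕ) (hn : 2 ≤ n) :
    BigOPow (dbar (Ftl G n)) (n - 2) := by
  obtain ⟨M, hM⟩ := G_bdd G hG (n + 1)
  have hM0 : 0 ≤ M := (norm_nonneg _).trans (hM 2 (by simp))
  refine ⟨M + 1, 2, by linarith, two_pos, fun z hz => ?_⟩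
  have hz1 : 1 < ‖z‖ := by linarith
  refine (norm_dbar_Ftl G hG hz1 n).trans ?_
  rw [div_le_iff₀ (by positivity), mul_assoc, ← pow_add, Nat.sub_add_cancel hn,
    ← norm_sub_cref hz1]
  gcongr
  · linarith [hM z hz]
  · exact norm_sub_cref_le hz1

lemma Ftl_radial (G : ℕ → ℂ → ℂ)
    (n : ℕ) 
    (hgr : ∀ k ≤ n, ∃ C' : ℝ, 0 ≤ C' ∧
      ∀ z ∈ ball (0 : ℂ) 1, ‖G (k + 1) z‖ ≤ C' * (1 - ‖z‖) ^ (-((k : ℝ) + 1 / 2)))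
    (θ : ℝ) (b : ℂ)
    (hb : Tendsto (fun r : ℝ => G 0 ((r : ℂ) * Complex.exp ((θ : ℂ) * Complex.I)))
      (𝓝[<] 1) (𝓝 b)) :
    Tendsto (fun r : ℝ => Ftl G n ((r : ℂ) * Complex.exp ((θ : ℂ) * Complex.I)))
      (𝓝[>] 1) (𝓝 b) := by
  have hnorm : ∀ r : ℝ, 1 < r → ‖(r : ℂ) * Complex.exp ((θ : ℂ) * Complex.I)‖ = r := by
    intro r hr
    rw [norm_mul, Complex.norm_exp_ofReal_mul_I, Complex.norm_real,
      Real.norm_of_nonneg (by linarith), mul_one]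
  have hcr : ∀ r : ℝ, cref ((r : ℂ) * Complex.exp ((θ : ℂ) * Complex.I)) =
      ((r⁻¹ : ℝ) : ℂ) * Complex.exp ((θ : ℂ) * Complex.I) := by
    intro r
    simp only [cref, map_mul, Complex.conj_ofReal, ← Complex.exp_conj, Complex.conj_I, mul_inv,
      ← Complex.exp_neg]
    simp
  simp only [Ftl]
  simp_rw [Finset.sum_range_succ']
  rw [← zero_add b]
  apply Tendsto.add
  · rw [← Finset.sum_const_zero (s := Finset.range n)]
    apply tendsto_finsetSum
    intro k hk
    obtain ⟨C, hC0, hC⟩ := hgr k (Finset.mem_range.1 hk).le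
    have hlim : Tendsto (fun r : ℝ => C * ((1 + r) ^ (k + 1) * (1 - r⁻¹) ^ (1 / 2 : ℝ)))
        (𝓝[>] 1) (𝓝 0) := by
      have hc : ContinuousAt (fun r : ℝ => C * ((1 + r) ^ (k + 1) * (1 - r⁻¹) ^ (1 / 2 : ℝ))) 1 := by
        have h1 : ContinuousAt (fun r : ℝ => 1 - r⁻¹) 1 :=
          continuousAt_const.sub (continuousAt_inv₀ one_ne_zero)
        have h2 := h1.rpow_const (p := (1 / 2 : ℝ)) (Or.inr (by norm_num))
        have h3 : ContinuousAt (fun r : ℝ => (1 + r) ^ (k + 1)) 1 := by fun_prop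
        exact continuousAt_const.mul (h3.mul h2)
      have := hc.tendsto.mono_left (nhdsWithin_le_nhds (s := Ioi 1))
      simpa using this
    refine squeeze_zero_norm' ?_ hlim
    filter_upwards [self_mem_nhdsWithin] with r hr
    have hr : 1 < r := hr
    have hz := hnorm r hr
    set z := (r : ℂ) * Complex.exp ((θ : ℂ) * Complex.I)
    have hz1 : 1 < ‖z‖ := by rw [hz]; exact hr
    have h1 := hC _ (cref_mem hz1)
    rw [norm_cref, hz] at h1
    have hri : r⁻¹ < 1 := inv_lt_one_of_one_lt₀ hr
    have hq : 0 < 1 - r⁻¹ := by linarith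
    have h2 : ‖(z - cref z) ^ (k + 1) / ((k + 1).factorial : ℂ)‖ ≤
        ((1 - r⁻¹) * (1 + r)) ^ (k + 1) := by
      rw [norm_div, norm_pow, Complex.norm_natCast, norm_sub_cref hz1, hz]
      have e : (1 - r⁻¹) * (1 + r) = r - r⁻¹ := by field_simp; ring
      rw [e]
      have : 0 ≤ r - r⁻¹ := by linarith
      apply div_le_self (by positivity)
      exact_mod_cast Nat.one_le_iff_ne_zero.2 (k + 1).factorial_ne_zero
    rw [norm_mul]
    refine (mul_le_mul h1 h2 (norm_nonneg _) (by positivity)).trans_eq ?_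
    have e : (1 - r⁻¹) ^ (-((k : ℝ) + 1 / 2)) * (1 - r⁻¹) ^ (k + 1) = (1 - r⁻¹) ^ (1 / 2 : ℝ) := by
      rw [← Real.rpow_natCast _ (k + 1), ← Real.rpow_add hq]
      congr 1
      push_cast
      ring
    rw [← e, mul_pow]
    ring
  · simp only [pow_zero, Nat.factorial_zero, Nat.cast_one, div_one, mul_one, hcr]
    have hinv : Tendsto (fun r : ℝ => r⁻¹) (𝓝[>] 1) (𝓝[<] 1) := by
      apply tendsto_nhdsWithin_of_tendsto_nhds_of_eventually_within
      · have := (continuousAt_inv₀ (one_ne_zero (α := ℝ))).tendsto.mono_left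
          (nhdsWithin_le_nhds (s := Ioi 1))
        simpa using this
      · filter_upwards [self_mem_nhdsWithin] with r hr
        exact inv_lt_one_of_one_lt₀ (Set.mem_Ioi.1 hr)
    exact hb.comp hinv

def Gseq (f F : ℂ → ℂ) : ℕ → ℂ → ℂ
  | 0 => F
  | k + 1 => iteratedDeriv k f

lemma Gseq_hasDerivAt (f F : ℂ → ℂ)
    (hf : DifferentiableOn ℂ f (ball (0 : ℂ) 1))
    (hFprim : ∀ z ∈ ball (0 : ℂ) 1, HasDerivAt F (f z) z) :
    ∀ k, ∀ z ∈ ball (0 : ℂ) 1, HasDerivAt (Gseq f F k) (Gseq f F (k + 1) z) z := by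
  have hd : ∀ k, DifferentiableOn ℂ (iteratedDeriv k f) (ball (0 : ℂ) 1) := by
    intro k
    induction k with
    | zero => simpa using hf
    | succ k ih => rw [iteratedDeriv_succ]; exact ih.deriv isOpen_ball
  intro k z hz
  cases k with
  | zero => simpa [Gseq] using hFprim z hz
  | succ k =>
    simp only [Gseq]
    rw [iteratedDeriv_succ]
    exact ((hd k).differentiableAt (isOpen_ball.mem_nhds hz)).hasDerivAt

/-- Theorem 3.1, (i) ⇒ (ii): a Besov function admits a pseudoanalytic extension
of its primitive. -/
theorem besov_implies_pseudoanalytic_extension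
    (p : ℝ) (hp : 1 ≤ p)
    (n : ℕ) (hn : 2 ≤ n)
    (f F : ℂ → ℂ)
    (hf : DifferentiableOn ℂ f (ball (0 : ℂ) 1))
    (hfBp : MemBesov p n f)
    (hF0 : F 0 = 0)
    (hFprim : ∀ z ∈ ball (0 : ℂ) 1, HasDerivAt F (f z) z)
    (hFH2 : MemH2 F)
    (Fstar : ℝ → ℂ)
    (hFb : RadialLimitIn F Fstar) :
    ∃ Ftil : ℂ → ℂ,
      ContDiffOn ℝ 1 Ftil {z : ℂ | 1 < ‖z‖} ∧
      RadialLimitOut Ftil Fstar ∧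
      BigOPow Ftil n ∧
      BigOPow (dbar Ftil) (n - 2) ∧
      (∫⁻ z in {z : ℂ | 1 < ‖z‖},
        ENNReal.ofReal (‖dbar Ftil z‖ ^ p /
          (‖z‖ ^ ((n : ℝ) * p / 2 - p + 2) - 1) ^ 2)) < ⊤ := by
  have hG := Gseq_hasDerivAt f F hf hFprim
  have hBG : (∫⁻ z in ball (0 : ℂ) 1,
      ENNReal.ofReal (‖Gseq f F (n + 1) z‖ ^ p * (1 - ‖z‖ ^ 2) ^ ((n : ℝ) * p - 2))) < ⊤ := hfBp
  obtain ⟨C, hC⟩ := besov_pointwise p hp n hn (Gseq f F (n + 1))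
    (fun z hz => (hG (n + 1) z hz).differentiableAt.differentiableWithinAt) hBG
  have hgr := growth_all (Gseq f F) hG n C hC
  refine ⟨Ftl (Gseq f F) n, Ftl_contDiffOn _ hG n, ?_, Ftl_bigO _ hG n, dbar_bigO _ hG n hn,
    Ftl_integral _ hG p hp n hn hBG⟩
  filter_upwards [hFb] with θ hθ
  exact Ftl_radial (Gseq f F) n hgr θ (Fstar θ) hθ

end
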